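/- arXiv:2510.18380 — 2 statements merged into one kernel-verified Lean document; each statement's English description precedes it below -/
import Mathlib

section
/- Let M ∈ ℝ⁵ be the moment vector of a single Gaussian mode, i.e. M_k = ρ Δ_k(v, σ²) for k = 0, …, 4 with ρ > 0, σ > 0, v ∈ ℝ, and let F = (M₁, …, M₄, ρ Δ₅(v, σ²)). With δ⁺ = v + √3 σ, the Hankel matrix H₂(δ⁺M − F) is positive semidefinite and satisfies det H₂(δ⁺M − F) = 0. -/
open MeasureTheory Real

/-- The `k`-th moment `Δ_k(v, s²)` of the normal distribution with mean `v` and variance `s²`. -/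
noncomputable def gaussMoment (v s : ℝ) (k : ℕ) : ℝ :=
  ∫ x : ℝ, x ^ k * ((2 * π * s ^ 2) ^ (-(1 : ℝ) / 2) * Real.exp (-(x - v) ^ 2 / (2 * s ^ 2)))

/-- The `3×3` Hankel matrix `H₂(c)` of a vector `c ∈ ℝ⁵`, with `(j,k)` entry `c_{j+k}`. -/
noncomputable def hankel2 (c : Fin 5 → ℝ) : Matrix (Fin 3) (Fin 3) ℝ :=
  Matrix.of fun j k => c ⟨j.1 + k.1, by have := j.isLt; have := k.isLt; omega⟩

/-!
Three-point Gauss–Hermite quadrature with nodes `v`, `v ± √3 σ` and weights `2/3`, `1/6`, `1/6` is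
exact for `N(v, σ²)` on polynomials of degree at most `5`. The entries `c_k` of `δ⁺M - F` are the
integrals of `ρ (δ⁺ - x) x ^ k` with `k ≤ 4`; the factor `δ⁺ - x` vanishes at the node
`δ⁺ = v + √3 σ` and is positive at the other two. Hence `c` is the moment vector of a nonnegative
measure with two atoms, and its `3 × 3` Hankel matrix is positive semidefinite of rank at most `2`.
-/

open Polynomial ProbabilityTheory
open scoped NNReal

section Stein

lemma hasDerivAt_gaussianPDFReal (μ : ℝ) (v : ℝ≥0) (x : ℝ) :
    HasDerivAt (gaussianPDFReal μ v) (-((x - μ) / v) * gaussianPDFReal μ v x) x := by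
  have exponent : HasDerivAt (fun y : ℝ => -(y - μ) ^ 2 / (2 * v)) (-((x - μ) / v)) x := by
    refine ((((hasDerivAt_id x).sub_const μ).pow 2).neg.div_const (2 * (v : ℝ))).congr_deriv ?_
    simp only [id_eq, Nat.cast_ofNat, Nat.add_one_sub_one, pow_one, mul_one, neg_div]
    rw [mul_div_mul_left _ _ two_ne_zero]
  rw [gaussianPDFReal_def]
  exact (exponent.exp.const_mul _).congr_deriv (by ring)

lemma integrable_gaussianReal_iff {E : Type*} [NormedAddCommGroup E] [NormedSpace ℝ E] {f : ℝ → E}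
    {μ : ℝ} {v : ℝ≥0} (hv : v ≠ 0) :
    Integrable f (gaussianReal μ v) ↔ Integrable fun x => gaussianPDFReal μ v x • f x := by
  simp only [gaussianReal_of_var_ne_zero μ hv,
    integrable_withDensity_iff_integrable_smul' (measurable_gaussianPDF μ v)
      (ae_of_all _ fun _ => gaussianPDF_lt_top), toReal_gaussianPDF]

theorem integral_sub_mul_gaussianReal {f f' : ℝ → ℝ} {μ : ℝ} {v : ℝ≥0}
    (hf : ∀ x, HasDerivAt f (f' x) x) (hf_int : Integrable f (gaussianReal μ v))
    (hf'_int : Integrable f' (gaussianReal μ v))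
    (hxf_int : Integrable (fun x => (x - μ) * f x) (gaussianReal μ v)) :
    ∫ x, (x - μ) * f x ∂gaussianReal μ v = v * ∫ x, f' x ∂gaussianReal μ v := by
  rcases eq_or_ne v 0 with rfl | hv
  · simp
  have hv' : (v : ℝ) ≠ 0 := NNReal.coe_ne_zero.mpr hv
  rw [integrable_gaussianReal_iff hv] at hf_int hf'_int hxf_int
  have by_parts :
      ∫ x, f x * (-((x - μ) / v) * gaussianPDFReal μ v x)
        = -∫ x, f' x * gaussianPDFReal μ v x := by
    refine integral_mul_deriv_eq_deriv_mul_of_integrable (fun x _ => hf x)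
      (fun x _ => hasDerivAt_gaussianPDFReal μ v x) ?_ ?_ ?_
    · exact (hxf_int.const_mul (-(v : ℝ)⁻¹)).congr
        (ae_of_all _ fun x => by simp only [smul_eq_mul, Pi.mul_apply]; ring)
    · exact hf'_int.congr (ae_of_all _ fun x => mul_comm _ _)
    · exact hf_int.congr (ae_of_all _ fun x => mul_comm _ _)
  simp only [integral_gaussianReal_eq_integral_smul hv, smul_eq_mul]
  calc ∫ x, gaussianPDFReal μ v x * ((x - μ) * f x)
      = ∫ x, -(v : ℝ) * (f x * (-((x - μ) / v) * gaussianPDFReal μ v x)) := by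
        congr with x; field_simp
    _ = v * ∫ x, gaussianPDFReal μ v x * f' x := by
        rw [integral_const_mul, by_parts, neg_mul_neg]; simp only [mul_comm]

end Stein

section Quadrature

variable (μ : ℝ) (v : ℝ≥0)

lemma integrable_eval_gaussianReal (p : ℝ[X]) :
    Integrable (fun x => p.eval x) (gaussianReal μ v) := by
  simp only [eval_eq_sum_range]
  refine integrable_finsetSum _ fun k _ => Integrable.const_mul ?_ _
  refine (integrable_norm_iff (by fun_prop)).mp ?_
  simpa only [norm_pow, id_eq, NNReal.coe_natCast] using
    (memLp_id_gaussianReal (μ := μ) (v := v) (k : ℝ≥0)).integrable_norm_pow'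

lemma integral_sub_mul_eval_gaussianReal (p : ℝ[X]) :
    ∫ x, (x - μ) * p.eval x ∂gaussianReal μ v
      = v * ∫ x, p.derivative.eval x ∂gaussianReal μ v := by
  have integrable_sub_mul := integrable_eval_gaussianReal μ v ((X - C μ) * p)
  simp only [eval_mul, eval_sub, eval_X, eval_C] at integrable_sub_mul
  exact integral_sub_mul_gaussianReal p.hasDerivAt (integrable_eval_gaussianReal μ v p)
    (integrable_eval_gaussianReal μ v _) integrable_sub_mul

lemma integral_sub_pow_add_two_gaussianReal (n : ℕ) :
    ∫ x, (x - μ) ^ (n + 2) ∂gaussianReal μ v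
      = (n + 1) * v * ∫ x, (x - μ) ^ n ∂gaussianReal μ v := by
  have stein := integral_sub_mul_eval_gaussianReal μ v ((X - C μ) ^ (n + 1))
  simp only [eval_pow, eval_sub, eval_X, eval_C, ← pow_succ', derivative_X_sub_C_pow, eval_mul,
    add_tsub_cancel_right, integral_const_mul] at stein
  rw [stein]
  push_cast
  ring

variable {μ v} {r : ℝ}

lemma integral_sub_pow_gaussianReal_eq_quadrature (hr : r ^ 2 = 3 * v) {n : ℕ} (hn : n ≤ 5) :
    ∫ x, (x - μ) ^ n ∂gaussianReal μ v = (-r) ^ n / 6 + 2 / 3 * 0 ^ n + r ^ n / 6 := by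
  have moment_zero : ∫ x, (x - μ) ^ 0 ∂gaussianReal μ v = 1 := by simp
  have moment_one : ∫ x, (x - μ) ^ 1 ∂gaussianReal μ v = 0 := by
    simpa using integral_sub_mul_eval_gaussianReal μ v 1
  have moment_add_two := integral_sub_pow_add_two_gaussianReal μ v
  interval_cases n
  · rw [moment_zero]; norm_num
  · rw [moment_one]; ring
  · rw [moment_add_two 0, moment_zero]
    linear_combination (-1 / 3) * hr
  · rw [moment_add_two 1, moment_one]; ring
  · rw [moment_add_two 2, moment_add_two 0, moment_zero]
    push_cast
    linear_combination (-1 / 3) * (r ^ 2 + 3 * v) * hr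
  · rw [moment_add_two 3, moment_add_two 1, moment_one]; ring

theorem integral_eval_gaussianReal_eq_quadrature (hr : r ^ 2 = 3 * v) {p : ℝ[X]}
    (hp : p.natDegree ≤ 5) :
    ∫ x, p.eval x ∂gaussianReal μ v
      = p.eval (μ - r) / 6 + 2 / 3 * p.eval μ + p.eval (μ + r) / 6 := by
  have eval_eq_taylor (x : ℝ) :
      p.eval x = ∑ n ∈ Finset.range 6, (taylor μ p).coeff n * (x - μ) ^ n := by
    have natDegree_lt : (taylor μ p).natDegree < 6 := by rw [natDegree_taylor]; omega
    rw [← taylor_eval_sub μ, eval_eq_sum_range' natDegree_lt]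
  have integrable_term (n : ℕ) :
      Integrable (fun x => (taylor μ p).coeff n * (x - μ) ^ n) (gaussianReal μ v) := by
    have integrable_monomial :=
      integrable_eval_gaussianReal μ v (C ((taylor μ p).coeff n) * (X - C μ) ^ n)
    simpa only [eval_mul, eval_pow, eval_sub, eval_X, eval_C] using integrable_monomial
  simp only [eval_eq_taylor, integral_finsetSum _ fun n _ => integrable_term n,
    integral_const_mul, Finset.mul_sum, Finset.sum_div, ← Finset.sum_add_distrib]
  refine Finset.sum_congr rfl fun n hn => ?_
  rw [integral_sub_pow_gaussianReal_eq_quadrature hr (Finset.mem_range_succ_iff.mp hn)]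
  ring

end Quadrature

section GaussMoment

lemma gaussMoment_eq_integral_gaussianReal (v : ℝ) {σ : ℝ} (hσ : σ ≠ 0) (k : ℕ) :
    gaussMoment v σ k = ∫ x, x ^ k ∂gaussianReal v (‖σ‖₊ ^ 2) := by
  have normalization : (2 * π * σ ^ 2) ^ (-(1 : ℝ) / 2) = (√(2 * π * σ ^ 2))⁻¹ := by
    rw [sqrt_eq_rpow, ← rpow_neg (by positivity), neg_div]
  rw [integral_gaussianReal_eq_integral_smul (by simpa using hσ), gaussMoment]
  simp only [normalization, gaussianPDFReal, NNReal.coe_pow, coe_nnnorm, norm_eq_abs, sq_abs,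
    smul_eq_mul, mul_comm (_ ^ k)]

theorem mul_gaussMoment_sub_gaussMoment_succ (v : ℝ) {σ : ℝ} (hσ : σ ≠ 0) {k : ℕ} (hk : k ≤ 4) :
    (v + √3 * σ) * gaussMoment v σ k - gaussMoment v σ (k + 1)
      = √3 * σ / 3 * (v - √3 * σ) ^ k + 2 * (√3 * σ) / 3 * v ^ k := by
  have hr : (√3 * σ) ^ 2 = 3 * ((‖σ‖₊ ^ 2 : ℝ≥0) : ℝ) := by simp [mul_pow]
  have quadrature (n : ℕ) (hn : n ≤ 5) : gaussMoment v σ n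
      = (v - √3 * σ) ^ n / 6 + 2 / 3 * v ^ n + (v + √3 * σ) ^ n / 6 := by
    rw [gaussMoment_eq_integral_gaussianReal v hσ]
    simpa using integral_eval_gaussianReal_eq_quadrature hr (p := X ^ n) (by simpa using hn)
  rw [quadrature k (by omega), quadrature (k + 1) (by omega)]
  ring

end GaussMoment

section Hankel

variable {ι : Type*} [Fintype ι]

lemma hankel2_sum_mul_pow [DecidableEq ι] (w x : ι → ℝ) :
    hankel2 (fun k => ∑ i, w i * x i ^ k.1)
      = (Matrix.rectVandermonde x 1 3).conjTranspose * Matrix.diagonal w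
          * Matrix.rectVandermonde x 1 3 := by
  ext j k
  rw [Matrix.mul_apply]
  simp only [hankel2, Matrix.of_apply, Matrix.mul_diagonal,
    Matrix.conjTranspose_apply, Matrix.rectVandermonde_apply, Pi.one_apply, one_pow, mul_one,
    star_trivial]
  exact Finset.sum_congr rfl fun i _ => by ring

theorem posSemidef_hankel2_sum_mul_pow {w : ι → ℝ} (hw : 0 ≤ w) (x : ι → ℝ) :
    (hankel2 fun k => ∑ i, w i * x i ^ k.1).PosSemidef := by
  classical
  rw [hankel2_sum_mul_pow]
  exact (Matrix.PosSemidef.diagonal hw).conjTranspose_mul_mul_same _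

theorem det_hankel2_sum_mul_pow_eq_zero (hι : Fintype.card ι < 3) (w x : ι → ℝ) :
    (hankel2 fun k => ∑ i, w i * x i ^ k.1).det = 0 := by
  classical
  by_contra hdet
  have rank_eq : (hankel2 fun k => ∑ i, w i * x i ^ k.1).rank = 3 := by
    rw [Matrix.rank_of_isUnit _ ((Matrix.isUnit_iff_isUnit_det _).mpr (Ne.isUnit hdet)),
      Fintype.card_fin]
  have rank_le : (hankel2 fun k => ∑ i, w i * x i ^ k.1).rank ≤ Fintype.card ι := by
    rw [hankel2_sum_mul_pow]
    exact (Matrix.rank_mul_le_left _ _).trans (Matrix.rank_le_card_width _)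
  omega

end Hankel

/-- for a single Gaussian mode `M_k = ρ Δ_k(v,σ²)` with flux
`F = (M₁,…,M₄, ρΔ₅(v,σ²))` and `δ⁺ = v + √3 σ`, the matrix `H₂(δ⁺M − F)` is positive
semidefinite with vanishing determinant. -/
theorem single_gaussian_boundary (ρ v σ : ℝ) (hρ : 0 < ρ) (hσ : 0 < σ)
    (M F : Fin 5 → ℝ)
    (hM : ∀ k : Fin 5, M k = ρ * gaussMoment v σ k.1)
    (hF : ∀ k : Fin 5, F k = ρ * gaussMoment v σ (k.1 + 1)) :
    (hankel2 (fun k => (v + Real.sqrt 3 * σ) * M k - F k)).PosSemidef ∧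
    (hankel2 (fun k => (v + Real.sqrt 3 * σ) * M k - F k)).det = 0 := by
  have two_atoms : (fun k => (v + √3 * σ) * M k - F k)
      = fun k : Fin 5 => ∑ i, ![ρ * (√3 * σ / 3), ρ * (2 * (√3 * σ) / 3)] i
          * ![v - √3 * σ, v] i ^ k.1 := by
    funext k
    have moments := mul_gaussMoment_sub_gaussMoment_succ v hσ.ne' (k := k.1) (by omega)
    rw [hM, hF, Fin.sum_univ_two]
    simp only [Matrix.cons_val_zero, Matrix.cons_val_one]
    linear_combination ρ * moments
  have weights_nonneg : 0 ≤ ![ρ * (√3 * σ / 3), ρ * (2 * (√3 * σ) / 3)] := by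
    refine fun i => ?_
    fin_cases i
    · exact (by positivity : 0 ≤ ρ * (√3 * σ / 3))
    · exact (by positivity : 0 ≤ ρ * (2 * (√3 * σ) / 3))
  rw [two_atoms]
  exact ⟨posSemidef_hankel2_sum_mul_pow weights_nonneg _,
    det_hankel2_sum_mul_pow_eq_zero (by simp) _ _⟩
end

section
/- Let λ > 0. Let M_L⁻, M_L⁺, M_R⁻, M_R⁺ ∈ ℝ⁵ each be of three-point HyQMOM form (each with its own parameters satisfying ρ₁, ρ₂, ρ₃ > 0 and v₁ < v₂ < v₃), with flux vectors F(·) and wave speeds δ⁺(·) = max{v₁, v₂, v₃, 0}, δ⁻(·) = min{v₁, v₂, v₃, 0}. Set δ_L⁺ = max{δ⁺(M_L⁻), δ⁺(M_L⁺)}, δ_L⁻ = min{δ⁻(M_L⁻), δ⁻(M_L⁺)}, similarly δ_R⁺, δ_R⁻, and let F̂_L = F̂(M_L⁻, M_L⁺) and F̂_R = F̂(M_R⁻, M_R⁺) be the HLL fluxes. Let M̄ = ½(M_L⁺ + M_R⁻) and M_new = M̄ − λ(F̂_R − F̂_L). If λ(δ_L⁺ − δ_L⁻) ≤ ½ and λ(δ_R⁺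 − δ_R⁻) ≤ ½, then H₂(M_new) is positive semidefinite. -/
/-- Parameters of a three-point HyQMOM state: positive weights and ordered abscissas. -/
structure HyqParams where
  r1 : ℝ
  r2 : ℝ
  r3 : ℝ
  v1 : ℝ
  v2 : ℝ
  v3 : ℝ
  hr1 : 0 < r1
  hr2 : 0 < r2
  hr3 : 0 < r3
  h12 : v1 < v2
  h23 : v2 < v3

/-- Moment vector `M_k = ρ₁v₁^k + ρ₂v₂^k + ρ₃v₃^k`, `k = 0,…,4`. -/
noncomputable def HyqParams.M (W : HyqParams) : Fin 5 → ℝ :=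
  fun k => W.r1 * W.v1 ^ k.1 + W.r2 * W.v2 ^ k.1 + W.r3 * W.v3 ^ k.1

/-- Flux vector `F(M) = (M₁,…,M₄,M₅)` with `M₅ = ρ₁v₁⁵ + ρ₂v₂⁵ + ρ₃v₃⁵`. -/
noncomputable def HyqParams.F (W : HyqParams) : Fin 5 → ℝ :=
  fun k => W.r1 * W.v1 ^ (k.1 + 1) + W.r2 * W.v2 ^ (k.1 + 1) + W.r3 * W.v3 ^ (k.1 + 1)

/-- Wave speed `δ⁺(M) = max{v₁, v₂, v₃, 0}`. -/
noncomputable def HyqParams.dp (W : HyqParams) : ℝ :=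
  max (max (max W.v1 W.v2) W.v3) 0

/-- Wave speed `δ⁻(M) = min{v₁, v₂, v₃, 0}`. -/
noncomputable def HyqParams.dm (W : HyqParams) : ℝ :=
  min (min (min W.v1 W.v2) W.v3) 0

/-- HLL numerical flux
`F̂(M⁻,M⁺) = (δ̂⁺F(M⁻) − δ̂⁻F(M⁺) + δ̂⁺δ̂⁻(M⁺ − M⁻))/(δ̂⁺ − δ̂⁻)`. -/
noncomputable def hllFlux (dp dm : ℝ) (Mm Mp Fm Fp : Fin 5 → ℝ) : Fin 5 → ℝ :=
  fun k => (dp * Fm k - dm * Fp k + dp * dm * (Mp k - Mm k)) / (dp - dm)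

/-!
For a velocity distribution with velocities in `[a, b]`, the Hankel matrices `H(M)` of its moments
and `H(F)` of its moment flux satisfy `a H(M) ≤ H(F) ≤ b H(M)` in the Loewner order, because
`yᵀ (H(F) - a H(M)) y = ∫ (x - a) p(x)² dμ` with `p(x) = ∑ yⱼ xʲ`. The HLL flux inherits the bounds
`δ_L⁻ H(M_L⁺) ≤ H(F̂_L)` and `H(F̂_R) ≤ δ_R⁺ H(M_R⁻)`, so that
`H(M_new) ≥ (1/2 + λ δ_L⁻) H(M_L⁺) + (1/2 - λ δ_R⁺) H(M_R⁻)`, and the CFL conditions make both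
coefficients nonnegative.
-/

section OrderedModule

variable {𝕜 E E' : Type*} [Field 𝕜] [AddCommGroup E] [Module 𝕜 E] [AddCommGroup E'] [Module 𝕜 E']

/-- The HLL numerical flux with wave speeds `dm ≤ 0 ≤ dp`, for states and fluxes in an arbitrary
vector space. At `dp = dm` it takes the junk value `0`. -/
def hllNumericalFlux (dp dm : 𝕜) (Mm Mp Fm Fp : E) : E :=
  (dp - dm)⁻¹ • (dp • Fm - dm • Fp + (dp * dm) • (Mp - Mm))

/-- The finite-volume update `½(ML + MR) - λ(FR - FL)` of a cell with one-sided interface states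
`ML`, `MR` and numerical fluxes `FL`, `FR` through its left and right interfaces. -/
def hllUpdate (lam : 𝕜) (ML MR FL FR : E) : E :=
  (1 / 2 : 𝕜) • (ML + MR) - lam • (FR - FL)

theorem map_hllNumericalFlux (f : E →ₗ[𝕜] E') (dp dm : 𝕜) (Mm Mp Fm Fp : E) :
    f (hllNumericalFlux dp dm Mm Mp Fm Fp) =
      hllNumericalFlux dp dm (f Mm) (f Mp) (f Fm) (f Fp) := by
  simp only [hllNumericalFlux, map_smul, map_add, map_sub]

theorem map_hllUpdate (f : E →ₗ[𝕜] E') (lam : 𝕜) (ML MR FL FR : E) :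
    f (hllUpdate lam ML MR FL FR) = hllUpdate lam (f ML) (f MR) (f FL) (f FR) := by
  simp only [hllUpdate, map_smul, map_add, map_sub]

variable [LinearOrder 𝕜] [IsStrictOrderedRing 𝕜] [PartialOrder E] [IsOrderedAddMonoid E]
  [PosSMulMono 𝕜 E] {dp dm lam : 𝕜} {Mm Mp Fm Fp : E}

theorem smul_le_hllNumericalFlux (hdm : dm ≤ 0) (hdp : 0 ≤ dp) (hd : dm < dp)
    (hFm : dm • Mm ≤ Fm) (hFp : dm • Mp ≤ Fp) :
    dm • Mp ≤ hllNumericalFlux dp dm Mm Mp Fm Fp := by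
  rw [hllNumericalFlux, le_inv_smul_iff_of_pos (sub_pos.2 hd)]
  calc (dp - dm) • dm • Mp
      = dp • dm • Mm + (-dm) • dm • Mp + (dp * dm) • (Mp - Mm) := by module
    _ ≤ dp • Fm + (-dm) • Fp + (dp * dm) • (Mp - Mm) := by
        have := neg_nonneg.2 hdm
        gcongr
    _ = dp • Fm - dm • Fp + (dp * dm) • (Mp - Mm) := by module

theorem hllNumericalFlux_le_smul (hdm : dm ≤ 0) (hdp : 0 ≤ dp) (hd : dm < dp)
    (hFm : Fm ≤ dp • Mm) (hFp : Fp ≤ dp • Mp) :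
    hllNumericalFlux dp dm Mm Mp Fm Fp ≤ dp • Mm := by
  rw [hllNumericalFlux, inv_smul_le_iff_of_pos (sub_pos.2 hd)]
  calc dp • Fm - dm • Fp + (dp * dm) • (Mp - Mm)
      = dp • Fm + (-dm) • Fp + (dp * dm) • (Mp - Mm) := by module
    _ ≤ dp • dp • Mm + (-dm) • dp • Mp + (dp * dm) • (Mp - Mm) := by
        have := neg_nonneg.2 hdm
        gcongr
    _ = (dp - dm) • dp • Mm := by module

theorem hllUpdate_nonneg {ML MR FL FR : E} (hlam : 0 ≤ lam) (hML : 0 ≤ ML) (hMR : 0 ≤ MR)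
    (hFL : dm • ML ≤ FL) (hFR : FR ≤ dp • MR)
    (hCFL_L : -(lam * dm) ≤ 1 / 2) (hCFL_R : lam * dp ≤ 1 / 2) :
    0 ≤ hllUpdate lam ML MR FL FR :=
  calc 0 ≤ (1 / 2 + lam * dm) • ML + (1 / 2 - lam * dp) • MR :=
        add_nonneg (smul_nonneg (by linarith) hML) (smul_nonneg (by linarith) hMR)
    _ = (1 / 2 : 𝕜) • (ML + MR) - lam • (dp • MR - dm • ML) := by module
    _ ≤ (1 / 2 : 𝕜) • (ML + MR) - lam • (FR - FL) := by gcongr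

end OrderedModule

/-- The `n × n` Hankel matrix of a real sequence, as a linear map. -/
def hankel (n : ℕ) : (ℕ → ℝ) →ₗ[ℝ] Matrix (Fin n) (Fin n) ℝ where
  toFun c := Matrix.of fun j k => c (j + k)
  map_add' _ _ := rfl
  map_smul' _ _ := rfl

theorem hankel_apply (n : ℕ) (c : ℕ → ℝ) (j k : Fin n) : hankel n c j k = c (j + k) := rfl

theorem hankel2_eq_hankel {c : Fin 5 → ℝ} {c' : ℕ → ℝ} (h : ∀ k : Fin 5, c k = c' k) :
    hankel2 c = hankel 3 c' := by
  ext j k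
  exact h _

section Moments

open MeasureTheory ProbabilityTheory
open scoped Matrix MatrixOrder

variable {μ : Measure ℝ} {n : ℕ} {a b : ℝ}

/-- The moments `∫ x ^ k dμ` of a velocity distribution `μ`. -/
noncomputable def momentSeq (μ : Measure ℝ) (k : ℕ) : ℝ := moment id k μ

/-- The flux of the moment hierarchy of `μ`: transport at velocity `x` shifts moments by one. -/
noncomputable def momentFlux (μ : Measure ℝ) (k : ℕ) : ℝ := momentSeq μ (k + 1)

/-- The HLL flux of the moment hierarchy between the velocity distributions `μ` and `ν`. -/
noncomputable def momentHLLFlux (dp dm : ℝ) (μ ν : Measure ℝ) : ℕ → ℝ :=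
  hllNumericalFlux dp dm (momentSeq μ) (momentSeq ν) (momentFlux μ) (momentFlux ν)

theorem dotProduct_hankel_mulVec_eq_integral {w : ℝ → ℝ}
    (hw : ∀ k, k + 1 < 2 * n → Integrable (fun x => w x * x ^ k) μ) (y : Fin n → ℝ) :
    y ⬝ᵥ hankel n (fun k => ∫ x, w x * x ^ k ∂μ) *ᵥ y =
      ∫ x, w x * (∑ j, y j * x ^ (j : ℕ)) ^ 2 ∂μ := by
  have hjk (j k : Fin n) : Integrable (fun x => y j * y k * (w x * x ^ (j + k : ℕ))) μ :=
    (hw _ (by omega)).const_mul _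
  calc y ⬝ᵥ hankel n (fun k => ∫ x, w x * x ^ k ∂μ) *ᵥ y
      = ∑ j, ∑ k, ∫ x, y j * y k * (w x * x ^ (j + k : ℕ)) ∂μ := by
        simp only [dotProduct, Matrix.mulVec, hankel_apply, Finset.mul_sum, integral_const_mul]
        exact Finset.sum_congr rfl fun j _ => Finset.sum_congr rfl fun k _ => by ring
    _ = ∫ x, ∑ j, ∑ k, y j * y k * (w x * x ^ (j + k : ℕ)) ∂μ := by
        rw [integral_finsetSum _ fun j _ => integrable_finsetSum _ fun k _ => hjk j k]
        exact Finset.sum_congr rfl fun j _ => (integral_finsetSum _ fun k _ => hjk j k).symm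
    _ = ∫ x, w x * (∑ j, y j * x ^ (j : ℕ)) ^ 2 ∂μ := by
        congr 1 with x
        rw [sq, Finset.sum_mul_sum, Finset.mul_sum]
        refine Finset.sum_congr rfl fun j _ => ?_
        rw [Finset.mul_sum]
        exact Finset.sum_congr rfl fun k _ => by ring

theorem hankel_integral_nonneg {w : ℝ → ℝ} (hw₀ : ∀ᵐ x ∂μ, 0 ≤ w x)
    (hw : ∀ k, k + 1 < 2 * n → Integrable (fun x => w x * x ^ k) μ) :
    0 ≤ hankel n fun k => ∫ x, w x * x ^ k ∂μ := by
  refine (Matrix.PosSemidef.of_dotProduct_mulVec_nonneg ?_ fun y => ?_).nonneg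
  · ext j k
    simp [hankel_apply, add_comm]
  · rw [star_trivial, dotProduct_hankel_mulVec_eq_integral hw]
    refine integral_nonneg_of_ae (hw₀.mono fun x hx => ?_)
    positivity

theorem hankel_momentSeq_nonneg (hμ : ∀ k, k + 1 < 2 * n → Integrable (fun x => x ^ k) μ) :
    0 ≤ hankel n (momentSeq μ) := by
  have h := hankel_integral_nonneg (μ := μ) (n := n) (w := fun _ => 1)
    (.of_forall fun _ => zero_le_one) (by simpa only [one_mul] using hμ)
  simp only [one_mul] at h
  exact h

theorem smul_hankel_momentFlux_add_smul_hankel_momentSeq_nonneg {r s : ℝ}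
    (hμ : ∀ k < 2 * n, Integrable (fun x => x ^ k) μ) (h : ∀ᵐ x ∂μ, 0 ≤ r * x + s) :
    0 ≤ r • hankel n (momentFlux μ) + s • hankel n (momentSeq μ) := by
  have hsplit (x : ℝ) (k : ℕ) : (r * x + s) * x ^ k = r * x ^ (k + 1) + s * x ^ k := by ring
  have hflux {k : ℕ} (hk : k + 1 < 2 * n) : Integrable (fun x => r * x ^ (k + 1)) μ :=
    (hμ _ hk).const_mul r
  have hstate {k : ℕ} (hk : k + 1 < 2 * n) : Integrable (fun x => s * x ^ k) μ :=
    (hμ k (by omega)).const_mul s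
  convert hankel_integral_nonneg (n := n) h fun k hk => ?_ using 1
  · ext i j
    simp only [Matrix.add_apply, Matrix.smul_apply, hankel_apply, hsplit, smul_eq_mul]
    rw [integral_add (hflux (by omega)) (hstate (by omega)), integral_const_mul,
      integral_const_mul]
    rfl
  · simp only [hsplit]
    exact (hflux hk).add (hstate hk)

theorem smul_hankel_momentSeq_le (hμ : ∀ k < 2 * n, Integrable (fun x => x ^ k) μ)
    (ha : ∀ᵐ x ∂μ, a ≤ x) : a • hankel n (momentSeq μ) ≤ hankel n (momentFlux μ) := by
  rw [← sub_nonneg]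
  convert smul_hankel_momentFlux_add_smul_hankel_momentSeq_nonneg (r := 1) (s := -a) hμ
    (ha.mono fun x hx => by linarith) using 1
  module

theorem hankel_momentFlux_le_smul (hμ : ∀ k < 2 * n, Integrable (fun x => x ^ k) μ)
    (hb : ∀ᵐ x ∂μ, x ≤ b) : hankel n (momentFlux μ) ≤ b • hankel n (momentSeq μ) := by
  rw [← sub_nonneg]
  convert smul_hankel_momentFlux_add_smul_hankel_momentSeq_nonneg (r := -1) (s := b) hμ
    (hb.mono fun x hx => by linarith) using 1
  module

theorem hyqmom_hll_update_posSemidef_general {lam dLp dLm dRp dRm : ℝ}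
    {μLm μLp μRm μRp : Measure ℝ} (hlam : 0 ≤ lam)
    (hLm : ∀ k < 2 * n, Integrable (fun x => x ^ k) μLm)
    (hLp : ∀ k < 2 * n, Integrable (fun x => x ^ k) μLp)
    (hRm : ∀ k < 2 * n, Integrable (fun x => x ^ k) μRm)
    (hRp : ∀ k < 2 * n, Integrable (fun x => x ^ k) μRp)
    (hdLm₀ : dLm ≤ 0) (hdLp₀ : 0 ≤ dLp) (hdL : dLm < dLp)
    (hdRm₀ : dRm ≤ 0) (hdRp₀ : 0 ≤ dRp) (hdR : dRm < dRp)
    (hdLm_m : ∀ᵐ x ∂μLm, dLm ≤ x) (hdLm_p : ∀ᵐ x ∂μLp, dLm ≤ x)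
    (hdRp_m : ∀ᵐ x ∂μRm, x ≤ dRp) (hdRp_p : ∀ᵐ x ∂μRp, x ≤ dRp)
    (hCFL_L : -(lam * dLm) ≤ 1 / 2) (hCFL_R : lam * dRp ≤ 1 / 2) :
    (hankel n (hllUpdate lam (momentSeq μLp) (momentSeq μRm)
      (momentHLLFlux dLp dLm μLm μLp) (momentHLLFlux dRp dRm μRm μRp))).PosSemidef := by
  simp only [← Matrix.nonneg_iff_posSemidef, momentHLLFlux, map_hllUpdate, map_hllNumericalFlux]
  exact hllUpdate_nonneg hlam
    (hankel_momentSeq_nonneg fun k hk => hLp k (by omega))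
    (hankel_momentSeq_nonneg fun k hk => hRm k (by omega))
    (smul_le_hllNumericalFlux hdLm₀ hdLp₀ hdL (smul_hankel_momentSeq_le hLm hdLm_m)
      (smul_hankel_momentSeq_le hLp hdLm_p))
    (hllNumericalFlux_le_smul hdRm₀ hdRp₀ hdR (hankel_momentFlux_le_smul hRm hdRp_m)
      (hankel_momentFlux_le_smul hRp hdRp_p))
    hCFL_L hCFL_R

end Moments

namespace HyqParams

open MeasureTheory

variable (W : HyqParams)

/-- The velocity distribution `ρ₁ δ_{v₁} + ρ₂ δ_{v₂} + ρ₃ δ_{v₃}` whose moments and moment flux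
are `W.M` and `W.F`. -/
noncomputable def measure : Measure ℝ :=
  ENNReal.ofReal W.r1 • Measure.dirac W.v1 + ENNReal.ofReal W.r2 • Measure.dirac W.v2 +
    ENNReal.ofReal W.r3 • Measure.dirac W.v3

theorem integrable_measure (f : ℝ → ℝ) : Integrable f W.measure := by
  have hdirac (r v : ℝ) : Integrable f (ENNReal.ofReal r • Measure.dirac v) :=
    (integrable_dirac enorm_lt_top).smul_measure ENNReal.ofReal_ne_top
  exact ((hdirac _ _).add_measure (hdirac _ _)).add_measure (hdirac _ _)

theorem integral_measure (f : ℝ → ℝ) :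
    ∫ x, f x ∂W.measure = W.r1 * f W.v1 + W.r2 * f W.v2 + W.r3 * f W.v3 := by
  have h := W.integrable_measure f
  rw [measure, integrable_add_measure, integrable_add_measure] at h
  rw [measure, integral_add_measure (h.1.1.add_measure h.1.2) h.2,
    integral_add_measure h.1.1 h.1.2]
  simp only [integral_smul_measure, integral_dirac, ENNReal.toReal_ofReal W.hr1.le,
    ENNReal.toReal_ofReal W.hr2.le, ENNReal.toReal_ofReal W.hr3.le, smul_eq_mul]

theorem M_eq_momentSeq (k : Fin 5) : W.M k = momentSeq W.measure k :=
  (W.integral_measure fun x => x ^ k.1).symm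

theorem F_eq_momentFlux (k : Fin 5) : W.F k = momentFlux W.measure k :=
  (W.integral_measure fun x => x ^ (k.1 + 1)).symm

theorem ae_measure {p : ℝ → Prop} (h₁ : p W.v1) (h₂ : p W.v2) (h₃ : p W.v3) :
    ∀ᵐ x ∂W.measure, p x := by
  have hdirac {r v : ℝ} (hv : p v) : ∀ᵐ x ∂ENNReal.ofReal r • Measure.dirac v, p x :=
    Measure.ae_smul_measure (by rwa [ae_dirac_eq, Filter.eventually_pure]) _
  simp only [measure, ae_add_measure_iff]
  exact ⟨⟨hdirac h₁, hdirac h₂⟩, hdirac h₃⟩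

theorem ae_dm_le : ∀ᵐ x ∂W.measure, W.dm ≤ x :=
  W.ae_measure (by simp [dm]) (by simp [dm]) (by simp [dm])

theorem ae_le_dp : ∀ᵐ x ∂W.measure, x ≤ W.dp :=
  W.ae_measure (by simp [dp]) (by simp [dp]) (by simp [dp])

theorem min_dm_nonpos (A B : HyqParams) : min A.dm B.dm ≤ 0 :=
  min_le_of_left_le (min_le_right _ _)

theorem max_dp_nonneg (A B : HyqParams) : 0 ≤ max A.dp B.dp :=
  le_max_of_le_left (le_max_right _ _)

theorem min_dm_lt_max_dp (A B : HyqParams) : min A.dm B.dm < max A.dp B.dp :=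
  calc min A.dm B.dm ≤ A.v1 := min_le_of_left_le (by simp [dm])
    _ < A.v2 := A.h12
    _ ≤ max A.dp B.dp := le_max_of_le_left (by simp [dp])

theorem hllFlux_eq_momentHLLFlux (A B : HyqParams) (dp dm : ℝ) (k : Fin 5) :
    hllFlux dp dm A.M B.M A.F B.F k = momentHLLFlux dp dm A.measure B.measure k := by
  simp only [hllFlux, momentHLLFlux, hllNumericalFlux, M_eq_momentSeq, F_eq_momentFlux,
    Pi.smul_apply, Pi.add_apply, Pi.sub_apply, smul_eq_mul]
  ring

theorem hankel2_hllFlux_update_eq_hankel (lam dLp dLm dRp dRm : ℝ)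
    (WLm WLp WRm WRp : HyqParams) :
    hankel2 (fun k => (WLp.M k + WRm.M k) / 2 - lam *
      (hllFlux dRp dRm WRm.M WRp.M WRm.F WRp.F k - hllFlux dLp dLm WLm.M WLp.M WLm.F WLp.F k)) =
    hankel 3 (hllUpdate lam (momentSeq WLp.measure) (momentSeq WRm.measure)
      (momentHLLFlux dLp dLm WLm.measure WLp.measure)
      (momentHLLFlux dRp dRm WRm.measure WRp.measure)) := by
  refine hankel2_eq_hankel fun k => ?_
  simp only [hllUpdate, M_eq_momentSeq, hllFlux_eq_momentHLLFlux, Pi.sub_apply, Pi.smul_apply,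
    Pi.add_apply, smul_eq_mul]
  ring

end HyqParams

/-- realizability of the collisionless HLL finite-volume update for the
three-point HyQMOM closure under the CFL conditions `λ(δ⁺ − δ⁻) ≤ 1/2` at both interfaces:
`H₂(M_new)` is positive semidefinite, where `M_new = ½(M_L⁺ + M_R⁻) − λ(F̂_R − F̂_L)`. -/
theorem hyqmom_hll_update_posSemidef (lam : ℝ) (hlam : 0 < lam)
    (WLm WLp WRm WRp : HyqParams)
    (dLp dLm dRp dRm : ℝ)
    (hdLp : dLp = max WLm.dp WLp.dp)
    (hdLm : dLm = min WLm.dm WLp.dm)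
    (hdRp : dRp = max WRm.dp WRp.dp)
    (hdRm : dRm = min WRm.dm WRp.dm)
    (FL FR : Fin 5 → ℝ)
    (hFL : FL = hllFlux dLp dLm WLm.M WLp.M WLm.F WLp.F)
    (hFR : FR = hllFlux dRp dRm WRm.M WRp.M WRm.F WRp.F)
    (hCFL_L : lam * (dLp - dLm) ≤ 1 / 2)
    (hCFL_R : lam * (dRp - dRm) ≤ 1 / 2) :
    (hankel2 (fun k => (WLp.M k + WRm.M k) / 2 - lam * (FR k - FL k))).PosSemidef := by
  subst hdLp hdLm hdRp hdRm hFL hFR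
  rw [HyqParams.hankel2_hllFlux_update_eq_hankel]
  exact hyqmom_hll_update_posSemidef_general hlam.le
    (fun _ _ => WLm.integrable_measure _) (fun _ _ => WLp.integrable_measure _)
    (fun _ _ => WRm.integrable_measure _) (fun _ _ => WRp.integrable_measure _)
    (HyqParams.min_dm_nonpos _ _) (HyqParams.max_dp_nonneg _ _) (HyqParams.min_dm_lt_max_dp _ _)
    (HyqParams.min_dm_nonpos _ _) (HyqParams.max_dp_nonneg _ _) (HyqParams.min_dm_lt_max_dp _ _)
    (WLm.ae_dm_le.mono fun _ => min_le_of_left_le) (WLp.ae_dm_le.mono fun _ => min_le_of_right_le)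
    (WRm.ae_le_dp.mono fun _ => le_max_of_le_left) (WRp.ae_le_dp.mono fun _ => le_max_of_le_right)
    (by linarith [mul_nonneg hlam.le (WLm.max_dp_nonneg WLp)])
    (by linarith [mul_nonpos_of_nonneg_of_nonpos hlam.le (WRm.min_dm_nonpos WRp)])
end
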